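/- arXiv:1711.06735 — 2 statements merged into one kernel-verified Lean document; each statement's English description precedes it below -/
import Mathlib

section
/- (Larin's theorem.) A polynomial f(X) = a₀ + a₁X + ⋯ + a_tX^t ∈ ℤ[X] is transitive mod 2ⁿ for every n ≥ 1 if and only if: (i) a₀ ≡ 1 (mod 2); (ii) a₁ ≡ 1 (mod 2); (iii) a₃ + a₅ + a₇ + ⋯ ≡ 2a₂ (mod 4); (iv) a₄ + a₆ + a₈ + ⋯ ≡ a₁ + a₂ − 1 (mod 4). -/
open Polynomial

/-- `f` is transitive mod `m`: the induced map on `ZMod m` has a single orbit. -/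
def TransitiveMod (f : ℤ[X]) (m : ℕ) : Prop :=
  ∀ x y : ZMod m, ∃ k : ℕ, (fun z : ZMod m => aeval z f)^[k] x = y

/-- The sum of the odd-indexed coefficients `a₃ + a₅ + a₇ + ⋯` of `f`. -/
noncomputable def oddCoeffSum (f : ℤ[X]) : ℤ :=
  ∑ i ∈ (Finset.range (f.natDegree + 1)).filter (fun i => Odd i ∧ 3 ≤ i), f.coeff i

/-- The sum of the even-indexed coefficients `a₄ + a₆ + a₈ + ⋯` of `f` with index ≥ 4. -/
noncomputable def evenCoeffSumFour (f : ℤ[X]) : ℤ :=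
  ∑ i ∈ (Finset.range (f.natDegree + 1)).filter (fun i => Even i ∧ 4 ≤ i), f.coeff i

/-!
Call level `n` the statement that `f^[2 ^ n]` is the translation by `2 ^ n` modulo `2 ^ (n + 1)`.
An orbit that meets every class modulo `2 ^ n` meets every class modulo `2 ^ (n + 1)` as soon as
level `n` holds, and otherwise some point would return too early; hence `f` is transitive modulo
`2 ^ n` exactly when the levels below `n` hold. From level `2` on, the levels propagate: level `1`
forces `f'` to take odd values, so the derivative of `f^[2 ^ n]` is `1` modulo `4` for `n ≥ 2`,
and a first-order Taylor expansion of `f^[2 ^ n] ∘ f^[2 ^ n]` gives the next level. Transitivity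
modulo all powers of `2` is thus transitivity modulo `8`.

Modulo `8`, the map `f` is quadratic on even integers and affine on odd ones, and exchanges the two
when level `0` holds. Under Larin's congruences the quadratic part of `f ∘ f` disappears: `f ∘ f`
is a translation by some `s ≡ 2 [ZMOD 4]` on each parity class, so `f^[4]` is the translation by
`4`.
-/

lemma modEq_or_modEq_add_of_modEq {N a b : ℤ} (h : a ≡ b [ZMOD N]) :
    a ≡ b [ZMOD N * 2] ∨ a ≡ b + N [ZMOD N * 2] := by
  obtain ⟨c, hc⟩ := Int.modEq_iff_dvd.1 h
  rcases Int.even_or_odd' c with ⟨d, rfl | rfl⟩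
  · exact .inl (Int.modEq_iff_dvd.2 ⟨d, by linear_combination hc⟩)
  · exact .inr (Int.modEq_iff_dvd.2 ⟨d + 1, by linear_combination hc⟩)

/-- The `n`-th dyadic level of transitivity for a self-map `g` of `ℤ`: modulo `2 ^ (n + 1)`, the
`2 ^ n`-th iterate of `g` is the translation by `2 ^ n`. -/
def DyadicShift (g : ℤ → ℤ) (n : ℕ) : Prop :=
  ∀ x : ℤ, g^[2 ^ n] x ≡ x + 2 ^ n [ZMOD 2 ^ (n + 1)]

lemma DyadicShift.iterate_two_pow_succ_modEq {g : ℤ → ℤ} {n : ℕ} (h : DyadicShift g n) (x : ℤ) :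
    g^[2 ^ (n + 1)] x ≡ x [ZMOD 2 ^ (n + 1)] :=
  calc g^[2 ^ (n + 1)] x = g^[2 ^ n] (g^[2 ^ n] x) := by
        rw [← Function.iterate_add_apply, ← two_mul, ← pow_succ']
    _ ≡ g^[2 ^ n] x + 2 ^ n [ZMOD 2 ^ (n + 1)] := h _
    _ ≡ x + 2 ^ n + 2 ^ n [ZMOD 2 ^ (n + 1)] := (h x).add_right _
    _ = x + 2 ^ (n + 1) := by ring
    _ ≡ x [ZMOD 2 ^ (n + 1)] := Int.add_modEq_right

lemma exists_iterate_modEq_of_dyadicShift {g : ℤ → ℤ} {n : ℕ} (h : ∀ m < n, DyadicShift g m)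
    (x y : ℤ) : ∃ k : ℕ, g^[k] x ≡ y [ZMOD 2 ^ n] := by
  induction n with
  | zero => exact ⟨0, by simpa using Int.modEq_one⟩
  | succ n ih =>
    obtain ⟨k, hk⟩ := ih fun m hm => h m (by omega)
    rw [pow_succ]
    rcases modEq_or_modEq_add_of_modEq hk.symm with hy | hy
    · exact ⟨k, hy.symm⟩
    · refine ⟨2 ^ n + k, ?_⟩
      rw [Function.iterate_add_apply]
      exact (h n n.lt_succ_self _).trans hy.symm

section TransitiveMod

variable {f : ℤ[X]} {m n : ℕ}

lemma aeval_intCast_eq_cast_eval {R : Type*} [Ring R] (f : ℤ[X]) (x : ℤ) :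
    aeval (x : R) f = (f.eval x : ℤ) := by
  simpa using aeval_algebraMap_apply R x f

lemma iterate_aeval_intCast (f : ℤ[X]) (m k : ℕ) (x : ℤ) :
    (fun z : ZMod m => aeval z f)^[k] x = (((f.eval ·)^[k] x : ℤ) : ZMod m) := by
  have h : Function.Semiconj (Int.cast : ℤ → ZMod m) (f.eval ·) (fun z : ZMod m => aeval z f) :=
    fun z => (aeval_intCast_eq_cast_eval f z).symm
  exact ((h.iterate_right k) x).symm

lemma transitiveMod_iff_exists_modEq :
    TransitiveMod f m ↔ ∀ x y : ℤ, ∃ k : ℕ, (f.eval ·)^[k] x ≡ y [ZMOD m] := by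
  simp only [TransitiveMod, (ZMod.intCast_surjective (n := m)).forall, iterate_aeval_intCast,
    ZMod.intCast_eq_intCast_iff]

lemma TransitiveMod.of_dvd (h : TransitiveMod f n) (hmn : m ∣ n) : TransitiveMod f m := by
  rw [transitiveMod_iff_exists_modEq] at h ⊢
  exact fun x y => (h x y).imp fun k hk => hk.of_dvd (Int.natCast_dvd_natCast.2 hmn)

lemma TransitiveMod.not_iterate_modEq {k : ℕ} (h : TransitiveMod f m) (hk : 0 < k) (hkm : k < m)
    (x : ℤ) : ¬ (f.eval ·)^[k] x ≡ x [ZMOD m] := by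
  intro hx
  have : NeZero m := ⟨by omega⟩
  have hper : Function.IsPeriodicPt (fun z : ZMod m => aeval z f) k x := by
    rwa [Function.IsPeriodicPt, Function.IsFixedPt, iterate_aeval_intCast,
      ZMod.intCast_eq_intCast_iff]
  have hsurj : Function.Surjective fun i : Fin k => (fun z : ZMod m => aeval z f)^[i] x := by
    intro y
    obtain ⟨j, rfl⟩ := h x y
    exact ⟨⟨j % k, Nat.mod_lt _ hk⟩, hper.iterate_mod_apply j⟩
  have hcard := Fintype.card_le_of_surjective _ hsurj
  rw [ZMod.card, Fintype.card_fin] at hcard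
  omega

lemma TransitiveMod.dyadicShift (h : TransitiveMod f (2 ^ (n + 1)))
    (hn : ∀ x : ℤ, (f.eval ·)^[2 ^ n] x ≡ x [ZMOD 2 ^ n]) : DyadicShift (f.eval ·) n := by
  intro x
  have hne : ¬ (f.eval ·)^[2 ^ n] x ≡ x [ZMOD 2 ^ n * 2] := by
    have := h.not_iterate_modEq (by positivity)
      (Nat.pow_lt_pow_right one_lt_two n.lt_succ_self) x
    rwa [Nat.cast_pow, Nat.cast_two, pow_succ] at this
  rw [pow_succ]
  exact (modEq_or_modEq_add_of_modEq (hn x)).resolve_left hne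

theorem transitiveMod_two_pow_iff :
    TransitiveMod f (2 ^ n) ↔ ∀ m < n, DyadicShift (f.eval ·) m := by
  refine ⟨fun h m hm => ?_, fun h => ?_⟩
  · induction m with
    | zero => exact (h.of_dvd (pow_dvd_pow 2 hm)).dyadicShift fun x => by simpa using Int.modEq_one
    | succ m ih =>
      exact (h.of_dvd (pow_dvd_pow 2 hm)).dyadicShift
        (ih (by omega)).iterate_two_pow_succ_modEq
  · rw [transitiveMod_iff_exists_modEq]
    exact_mod_cast exists_iterate_modEq_of_dyadicShift h

end TransitiveMod

lemma eval_modEq (f : ℤ[X]) {m x y : ℤ} (h : x ≡ y [ZMOD m]) : f.eval x ≡ f.eval y [ZMOD m] :=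
  Int.modEq_iff_dvd.2 ((Int.modEq_iff_dvd.1 h).trans (sub_dvd_eval_sub y x f))

lemma factorial_dvd_eval_iterate_derivative {R : Type*} [CommSemiring R] (p : R[X]) (k : ℕ)
    (x : R) : (k.factorial : R) ∣ (derivative^[k] p).eval x := by
  obtain ⟨q, -, hq⟩ := exists_iterate_derivative_eq_factorial_smul p k
  simp [hq]

lemma eval_derivative_modEq_four (f : ℤ[X]) {x y : ℤ} (h : x ≡ y [ZMOD 2]) :
    f.derivative.eval x ≡ f.derivative.eval y [ZMOD 4] := by
  obtain ⟨t, rfl⟩ := Int.modEq_iff_add_fac.1 h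
  obtain ⟨k, hk⟩ := f.derivative.binomExpansion x (2 * t)
  obtain ⟨c, hc⟩ : 2 ∣ f.derivative.derivative.eval x :=
    factorial_dvd_eval_iterate_derivative f 2 x
  exact Int.modEq_iff_dvd.2 ⟨c * t + k * t ^ 2, by rw [hk, hc]; ring⟩

lemma DyadicShift.odd_eval_derivative {f : ℤ[X]} (h : DyadicShift (f.eval ·) 1) (x : ℤ) :
    Odd (f.derivative.eval x) := by
  by_contra hx
  obtain ⟨r, hr⟩ := Int.not_odd_iff_even.1 hx
  obtain ⟨k, hk⟩ := f.binomExpansion x 2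
  have heval : f.eval (x + 2) ≡ f.eval x [ZMOD 4] :=
    (Int.modEq_iff_dvd.2 ⟨r + k, by rw [hk, hr]; ring⟩ : f.eval x ≡ f.eval (x + 2) [ZMOD 4]).symm
  have hshift : x + 2 + 2 ≡ x + 2 [ZMOD 4] :=
    (h (x + 2)).symm.trans ((eval_modEq f heval).trans (h x))
  exact absurd (Int.add_modEq_left_iff.1 hshift) (by norm_num)

lemma eval_derivative_comp_self_modEq_one {P : ℤ[X]} (hP : ∀ x, P.eval x ≡ x [ZMOD 2])
    (hodd : ∀ x, Odd (P.derivative.eval x)) (x : ℤ) :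
    (P.comp P).derivative.eval x ≡ 1 [ZMOD 4] := by
  rw [derivative_comp, eval_mul, eval_comp]
  calc P.derivative.eval x * P.derivative.eval (P.eval x)
      ≡ P.derivative.eval x * P.derivative.eval x [ZMOD 4] :=
        (eval_derivative_modEq_four P (hP x)).mul_left _
    _ = P.derivative.eval x ^ 2 := (sq _).symm
    _ ≡ 1 [ZMOD 4] := Int.sq_mod_four_eq_one_of_odd (hodd x)

lemma eval_comp_self_modEq_add_two_pow {P : ℤ[X]} {n : ℕ} (hn : 2 ≤ n)
    (hP : ∀ x, P.eval x ≡ x + 2 ^ n [ZMOD 2 ^ (n + 1)])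
    (hP' : ∀ x, P.derivative.eval x ≡ 1 [ZMOD 4]) (x : ℤ) :
    (P.comp P).eval x ≡ x + 2 ^ (n + 1) [ZMOD 2 ^ (n + 2)] := by
  obtain ⟨m, rfl⟩ := Nat.exists_eq_add_of_le hn
  obtain ⟨c, hc⟩ := Int.modEq_iff_add_fac.1 (hP x).symm
  obtain ⟨e, he⟩ := Int.modEq_iff_add_fac.1 (hP' x).symm
  obtain ⟨k, hk⟩ := P.binomExpansion x (2 ^ (2 + m) * (2 * c + 1))
  have hx : P.eval x = x + 2 ^ (2 + m) * (2 * c + 1) := by rw [hc]; ring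
  rw [eval_comp, hx, hk, hx, he]
  refine (Int.modEq_iff_add_fac.2
    ⟨c + e * (2 * c + 1) + k * 2 ^ m * (2 * c + 1) ^ 2, ?_⟩).symm
  ring

lemma comp_iterate_add_X {R : Type*} [CommSemiring R] (p : R[X]) (m n : ℕ) :
    p.comp^[m + n] X = (p.comp^[m] X).comp (p.comp^[n] X) := by
  induction m with
  | zero => simp
  | succ m ih => rw [Nat.succ_add, Function.iterate_succ_apply', Function.iterate_succ_apply', ih,
      comp_assoc]

theorem DyadicShift.of_two_le {f : ℤ[X]} (h₁ : DyadicShift (f.eval ·) 1)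
    (h₂ : DyadicShift (f.eval ·) 2) {n : ℕ} (hn : 2 ≤ n) : DyadicShift (f.eval ·) n := by
  have eval_iter (k : ℕ) (x : ℤ) : (f.comp^[k] X).eval x = (f.eval ·)^[k] x := by
    rw [iterate_comp_eval, eval_X]
  have iter_succ (k : ℕ) :
      f.comp^[2 ^ (k + 1)] X = (f.comp^[2 ^ k] X).comp (f.comp^[2 ^ k] X) := by
    rw [pow_succ, mul_two, comp_iterate_add_X]
  suffices DyadicShift (f.eval ·) n ∧
      ∀ x, (f.comp^[2 ^ n] X).derivative.eval x ≡ 1 [ZMOD 4] from this.1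
  induction n, hn using Nat.le_induction with
  | base =>
    refine ⟨h₂, fun x => ?_⟩
    rw [iter_succ 1]
    refine eval_derivative_comp_self_modEq_one (fun y => ?_) (fun y => ?_) x
    · rw [eval_iter]
      exact ((h₁ y).of_dvd (by norm_num)).trans Int.add_modEq_right
    · simpa [derivative_comp, Int.odd_mul] using
        ⟨h₁.odd_eval_derivative y, h₁.odd_eval_derivative (f.eval y)⟩
  | succ n hn ih =>
    obtain ⟨hshift, hderiv⟩ := ih
    simp only [DyadicShift, ← eval_iter] at hshift ⊢
    rw [iter_succ]
    refine ⟨eval_comp_self_modEq_add_two_pow hn hshift hderiv,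
      eval_derivative_comp_self_modEq_one (fun x => ?_) (fun x => ?_)⟩
    · exact ((hshift x).of_dvd (dvd_pow_self 2 n.succ_ne_zero)).trans
        (Int.add_modEq_left_iff.2 (dvd_pow_self 2 (by omega)))
    · exact Int.odd_iff.2 ((hderiv x).of_dvd (by norm_num))

lemma pow_add_two_mul_of_pow_add_two {M : Type*} [Monoid M] {x : M} {m : ℕ}
    (h : x ^ (m + 2) = x ^ m) (k : ℕ) : x ^ (m + 2 * k) = x ^ m := by
  induction k with
  | zero => rfl
  | succ k ih => rw [mul_add_one, ← add_assoc, pow_add, ih, ← pow_add, h]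

lemma aeval_eq_of_pow_five_eq {R : Type*} [Ring R] (f : ℤ[X]) {x : R} (hx : x ^ 5 = x ^ 3) :
    aeval x f = f.coeff 0 + f.coeff 1 * x + f.coeff 2 * x ^ 2 + oddCoeffSum f * x ^ 3
      + evenCoeffSumFour f * x ^ 4 := by
  have split (i : ℕ) (a : R) : a = (if i < 3 then a else 0)
      + (if Odd i ∧ 3 ≤ i then a else 0) + (if Even i ∧ 4 ≤ i then a else 0) := by
    grind
  have low : ∑ i ∈ Finset.range (f.natDegree + 1) with i < 3, (f.coeff i : R) * x ^ i
      = ∑ i ∈ Finset.range 3, (f.coeff i : R) * x ^ i := by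
    refine Finset.sum_subset (by grind) fun i hi hi' => ?_
    rw [coeff_eq_zero_of_natDegree_lt (by grind), Int.cast_zero, zero_mul]
  have odd_part : ∑ i ∈ Finset.range (f.natDegree + 1) with Odd i ∧ 3 ≤ i, (f.coeff i : R) * x ^ i
      = oddCoeffSum f * x ^ 3 := by
    rw [oddCoeffSum, Int.cast_sum, Finset.sum_mul]
    refine Finset.sum_congr rfl fun i hi => ?_
    obtain ⟨k, rfl⟩ : ∃ k, i = 3 + 2 * k := ⟨(i - 3) / 2, by grind⟩
    rw [pow_add_two_mul_of_pow_add_two hx]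
  have even_part : ∑ i ∈ Finset.range (f.natDegree + 1) with Even i ∧ 4 ≤ i,
      (f.coeff i : R) * x ^ i = evenCoeffSumFour f * x ^ 4 := by
    rw [evenCoeffSumFour, Int.cast_sum, Finset.sum_mul]
    refine Finset.sum_congr rfl fun i hi => ?_
    obtain ⟨k, rfl⟩ : ∃ k, i = 4 + 2 * k := ⟨(i - 4) / 2, by grind⟩
    rw [pow_add_two_mul_of_pow_add_two (by rw [pow_succ, hx, ← pow_succ])]
  calc aeval x f = ∑ i ∈ Finset.range (f.natDegree + 1), (f.coeff i : R) * x ^ i := by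
        simp only [aeval_eq_sum_range, zsmul_eq_mul]
    _ = ∑ i ∈ Finset.range 3, (f.coeff i : R) * x ^ i + oddCoeffSum f * x ^ 3
          + evenCoeffSumFour f * x ^ 4 := by
        rw [← low, ← odd_part, ← even_part]
        simp only [Finset.sum_filter, ← Finset.sum_add_distrib, ← split]
    _ = _ := by simp [Finset.sum_range_succ]

lemma eval_modEq_eight_of_even (f : ℤ[X]) {x : ℤ} (hx : Even x) :
    f.eval x ≡ f.coeff 0 + f.coeff 1 * x + f.coeff 2 * x ^ 2 [ZMOD 8] := by
  have hx3 : (x : ZMod 8) ^ 3 = 0 := by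
    obtain ⟨y, rfl⟩ := hx
    have h8 : (8 : ZMod 8) = 0 := rfl
    push_cast
    linear_combination (y : ZMod 8) ^ 3 * h8
  refine (ZMod.intCast_eq_intCast_iff _ _ 8).1 ?_
  rw [← aeval_intCast_eq_cast_eval,
    aeval_eq_of_pow_five_eq f (by rw [pow_add _ 3 2, hx3, zero_mul]), pow_succ _ 3, hx3]
  push_cast
  ring

lemma eval_modEq_eight_of_odd (f : ℤ[X]) {x : ℤ} (hx : Odd x) :
    f.eval x ≡ f.coeff 0 + f.coeff 2 + evenCoeffSumFour f
      + (f.coeff 1 + oddCoeffSum f) * x [ZMOD 8] := by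
  have hx2 : (x : ZMod 8) ^ 2 = 1 := by
    exact_mod_cast (ZMod.intCast_eq_intCast_iff _ _ 8).2
      (Int.modEq_iff_dvd.2 (Int.eight_dvd_sq_sub_one_of_odd hx)).symm
  have hx3 : (x : ZMod 8) ^ 3 = x := by rw [pow_succ, hx2, one_mul]
  have hx4 : (x : ZMod 8) ^ 4 = 1 := by rw [pow_mul _ 2 2, hx2, one_pow]
  refine (ZMod.intCast_eq_intCast_iff _ _ 8).1 ?_
  rw [← aeval_intCast_eq_cast_eval,
    aeval_eq_of_pow_five_eq f (by rw [pow_add _ 3 2, hx2, mul_one]), hx2, hx3, hx4]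
  push_cast
  ring

/-- `g` agrees modulo `8` with `a + b x + c x ^ 2` on the even integers and with `v + u x` on the
odd ones. -/
structure EvenQuadraticOddAffine (g : ℤ → ℤ) (a b c u v : ℤ) : Prop where
  of_even {x : ℤ} : Even x → g x ≡ a + b * x + c * x ^ 2 [ZMOD 8]
  of_odd {x : ℤ} : Odd x → g x ≡ v + u * x [ZMOD 8]

lemma evenQuadraticOddAffine_eval (f : ℤ[X]) :
    EvenQuadraticOddAffine (f.eval ·) (f.coeff 0) (f.coeff 1) (f.coeff 2)
      (f.coeff 1 + oddCoeffSum f) (f.coeff 0 + f.coeff 2 + evenCoeffSumFour f) :=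
  ⟨eval_modEq_eight_of_even f, eval_modEq_eight_of_odd f⟩

namespace EvenQuadraticOddAffine

variable {g : ℤ → ℤ} {a b c u v : ℤ} (hg : EvenQuadraticOddAffine g a b c u v)

include hg

lemma odd_apply (ha : Odd a) {x : ℤ} (hx : Even x) : Odd (g x) := by
  have hgx : g x ≡ a + b * x + c * x ^ 2 [ZMOD 2] := (hg.of_even hx).of_dvd (by norm_num)
  rw [Int.odd_iff, hgx, ← Int.odd_iff]
  exact (ha.add_even (hx.mul_left b)).add_even ((hx.pow_of_ne_zero two_ne_zero).mul_left c)

lemma even_apply (hu : Odd u) (hv : Odd v) {x : ℤ} (hx : Odd x) : Even (g x) := by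
  have hgx : g x ≡ v + u * x [ZMOD 2] := (hg.of_odd hx).of_dvd (by norm_num)
  rw [Int.even_iff, hgx, ← Int.even_iff]
  exact hv.add_odd (hu.mul hx)

lemma apply_apply_of_even (ha : Odd a) {x : ℤ} (hx : Even x) :
    g (g x) ≡ v + u * a + u * b * x + u * c * x ^ 2 [ZMOD 8] :=
  calc g (g x) ≡ v + u * g x [ZMOD 8] := hg.of_odd (hg.odd_apply ha hx)
    _ ≡ v + u * (a + b * x + c * x ^ 2) [ZMOD 8] := ((hg.of_even hx).mul_left u).add_left v
    _ = v + u * a + u * b * x + u * c * x ^ 2 := by ring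

lemma odd_of_dyadicShift_zero (h₀ : DyadicShift g 0) : Odd a := by
  have h : a ≡ 1 [ZMOD 2] := by
    simpa using ((hg.of_even Even.zero).of_dvd (by norm_num : (2 : ℤ) ∣ 8)).symm.trans (h₀ 0)
  exact Int.odd_iff.2 h

lemma modEq_of_dyadicShift_one (ha : Odd a) (h₁ : DyadicShift g 1) :
    v + u * a ≡ 2 [ZMOD 4] ∧ Odd u ∧ Odd b := by
  have hx {x : ℤ} (hx : Even x) : v + u * a + u * b * x + u * c * x ^ 2 ≡ x + 2 [ZMOD 4] :=
    ((hg.apply_apply_of_even ha hx).of_dvd (by norm_num)).symm.trans (h₁ x)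
  have hx₀ : v + u * a ≡ 2 [ZMOD 4] := by simpa using hx Even.zero
  have hx₂ := hx even_two
  refine ⟨hx₀, Int.odd_mul.1 (Int.odd_iff.2 ?_)⟩
  grind [Int.ModEq]

lemma modEq_of_dyadicShift_two (ha : Odd a) (hb : Odd b) (hu : Odd u)
    (hs : v + u * a ≡ 2 [ZMOD 4]) (h₂ : DyadicShift g 2) : u * b + 2 * c ≡ 1 [ZMOD 4] := by
  set y := g (g 0)
  have hy : y ≡ v + u * a [ZMOD 8] := by simpa using hg.apply_apply_of_even ha Even.zero
  have hy4 : y ≡ 2 [ZMOD 4] := (hy.of_dvd (by norm_num)).trans hs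
  have hyy : v + u * a + u * b * y + u * c * y ^ 2 ≡ 4 [ZMOD 8] :=
    (hg.apply_apply_of_even ha (by grind [Int.ModEq])).symm.trans (by simpa using h₂ 0)
  have hdouble : 2 * (u * b + 2 * c) + 2 ≡ v + u * a + u * b * y + u * c * y ^ 2 [ZMOD 8] := by
    obtain ⟨j, hj⟩ := Int.modEq_iff_add_fac.1 hy
    obtain ⟨k, hk⟩ := Int.modEq_iff_add_fac.1 hy4.symm
    obtain ⟨r, hr⟩ := hu.mul hb
    obtain ⟨t, ht⟩ := hu
    refine Int.modEq_iff_dvd.2 ⟨j + k * (r + 1) + c * t + 2 * u * c * (k + k ^ 2), ?_⟩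
    rw [hj, hk]
    linear_combination 4 * k * hr + 4 * c * ht
  have hcancel : 2 * (u * b + 2 * c) ≡ 2 * 1 [ZMOD 2 * 4] :=
    Int.ModEq.add_right_cancel' 2 (hdouble.trans hyy)
  exact Int.ModEq.mul_left_cancel' two_ne_zero hcancel

lemma apply_apply_modEq_add_of_even (ha : Odd a) (hu : Odd u) (hr : u * b + 2 * c ≡ 1 [ZMOD 4])
    {x : ℤ} (hx : Even x) : g (g x) ≡ x + (v + u * a) [ZMOD 8] := by
  refine (hg.apply_apply_of_even ha hx).trans ?_
  obtain ⟨ρ, hρ⟩ := Int.modEq_iff_add_fac.1 hr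
  obtain ⟨μ, rfl⟩ := hu
  obtain ⟨y, rfl⟩ := hx.two_dvd
  obtain ⟨k, hk⟩ := (Int.even_mul_pred_self y).two_dvd
  -- For `x = 2 * y` the quadratic term and the excess of `u * b * x` over `x` add up to
  -- `4 * c * (y ^ 2 - y)` modulo `8`, which vanishes.
  refine Int.modEq_iff_dvd.2 ⟨ρ * y - c * k - μ * c * y ^ 2, ?_⟩
  linear_combination 2 * y * hρ - 4 * c * hk

lemma apply_apply_modEq_add_of_odd (ha : Odd a) (hu : Odd u) (hv : Odd v)
    (hr : u * b + 2 * c ≡ 1 [ZMOD 4]) {x : ℤ} (hx : Odd x) :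
    g (g x) ≡ x + u * (v + u * a) [ZMOD 8] := by
  have hgx : Even (g x) := hg.even_apply hu hv hx
  -- `g` conjugates its square on odd integers to its square on even ones, and is affine there.
  have hconj : v + u * g (g x) ≡ v + u * x + (v + u * a) [ZMOD 8] :=
    calc v + u * g (g x) ≡ g (g (g x)) [ZMOD 8] := (hg.of_odd (hg.odd_apply ha hgx)).symm
      _ ≡ g x + (v + u * a) [ZMOD 8] := hg.apply_apply_modEq_add_of_even ha hu hr hgx
      _ ≡ v + u * x + (v + u * a) [ZMOD 8] := (hg.of_odd hx).add_right _
  have hu2 : u ^ 2 ≡ 1 [ZMOD 8] :=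
    (Int.modEq_iff_dvd.2 (Int.eight_dvd_sq_sub_one_of_odd hu)).symm
  calc g (g x) = 1 * g (g x) := (one_mul _).symm
    _ ≡ u ^ 2 * g (g x) [ZMOD 8] := hu2.symm.mul_right _
    _ = u * (v + u * g (g x)) - u * v := by ring
    _ ≡ u * (v + u * x + (v + u * a)) - u * v [ZMOD 8] := (hconj.mul_left u).sub_right _
    _ = u ^ 2 * x + u * (v + u * a) := by ring
    _ ≡ 1 * x + u * (v + u * a) [ZMOD 8] := (hu2.mul_right x).add_right _
    _ = x + u * (v + u * a) := by rw [one_mul]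

lemma dyadicShift_zero (ha : Odd a) (hu : Odd u) (hv : Odd v) : DyadicShift g 0 := by
  intro x
  change g x ≡ x + 1 [ZMOD 2]
  rcases Int.even_or_odd x with hx | hx
  · exact (Int.odd_iff.1 (hg.odd_apply ha hx)).trans (Int.odd_iff.1 hx.add_one).symm
  · exact (Int.even_iff.1 (hg.even_apply hu hv hx)).trans (Int.even_iff.1 hx.add_one).symm

lemma exists_apply_apply_modEq_add (ha : Odd a) (hu : Odd u) (hv : Odd v)
    (hs : v + u * a ≡ 2 [ZMOD 4]) (hr : u * b + 2 * c ≡ 1 [ZMOD 4]) (x : ℤ) :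
    ∃ s, s ≡ 2 [ZMOD 4] ∧ g (g x) ≡ x + s [ZMOD 8] ∧ g (g (g (g x))) ≡ g (g x) + s [ZMOD 8] := by
  rcases Int.even_or_odd x with hx | hx
  · have hggx : Even (g (g x)) := hg.even_apply hu hv (hg.odd_apply ha hx)
    exact ⟨v + u * a, hs, hg.apply_apply_modEq_add_of_even ha hu hr hx,
      hg.apply_apply_modEq_add_of_even ha hu hr hggx⟩
  · have hggx : Odd (g (g x)) := hg.odd_apply ha (hg.even_apply hu hv hx)
    have hus : u * (v + u * a) ≡ 2 [ZMOD 4] := by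
      obtain ⟨t, rfl⟩ := hu
      refine (hs.mul_left _).trans (Int.modEq_iff_dvd.2 ⟨-t, by ring⟩)
    exact ⟨u * (v + u * a), hus, hg.apply_apply_modEq_add_of_odd ha hu hv hr hx,
      hg.apply_apply_modEq_add_of_odd ha hu hv hr hggx⟩

theorem dyadicShift_iff :
    (∀ m < 3, DyadicShift g m) ↔
      Odd a ∧ v + u * a ≡ 2 [ZMOD 4] ∧ u * b + 2 * c ≡ 1 [ZMOD 4] := by
  constructor
  · intro h
    have ha := hg.odd_of_dyadicShift_zero (h 0 (by norm_num))
    obtain ⟨hs, hu, hb⟩ := hg.modEq_of_dyadicShift_one ha (h 1 (by norm_num))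
    exact ⟨ha, hs, hg.modEq_of_dyadicShift_two ha hb hu hs (h 2 (by norm_num))⟩
  · rintro ⟨ha, hs, hr⟩
    have hub : Odd (u * b) := by grind [Int.ModEq]
    have hu : Odd u := (Int.odd_mul.1 hub).1
    have hua : Odd (u * a) := hu.mul ha
    have hv : Odd v := by grind [Int.ModEq]
    intro m hm
    interval_cases m
    · exact hg.dyadicShift_zero ha hu hv
    · exact fun x => by
        obtain ⟨s, hs, hx, -⟩ := hg.exists_apply_apply_modEq_add ha hu hv hs hr x
        exact (hx.of_dvd (by norm_num)).trans (hs.add_left x)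
    · exact fun x => by
        obtain ⟨s, hs, hx, hx'⟩ := hg.exists_apply_apply_modEq_add ha hu hv hs hr x
        calc g (g (g (g x))) ≡ g (g x) + s [ZMOD 8] := hx'
          _ ≡ x + s + s [ZMOD 8] := hx.add_right s
          _ = x + 2 * s := by ring
          _ ≡ x + 2 * 2 [ZMOD 8] := (hs.mul_left' (c := 2)).add_left x

end EvenQuadraticOddAffine

lemma odd_and_modEq_iff_coeff_modEq (a b c d e : ℤ) :
    (Odd a ∧ a + c + e + (b + d) * a ≡ 2 [ZMOD 4] ∧ (b + d) * b + 2 * c ≡ 1 [ZMOD 4]) ↔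
    (a ≡ 1 [ZMOD 2] ∧ b ≡ 1 [ZMOD 2] ∧ d ≡ 2 * c [ZMOD 4] ∧ e ≡ b + c - 1 [ZMOD 4]) := by
  have linearize (ha : Odd a) (hb : Odd b) (hd : Even d) :
      a + c + e + (b + d) * a ≡ 1 + b + c + d + e [ZMOD 4] ∧
        (b + d) * b + 2 * c ≡ 1 + d + 2 * c [ZMOD 4] := by
    obtain ⟨α, rfl⟩ := ha
    obtain ⟨β, rfl⟩ := hb
    obtain ⟨δ, rfl⟩ := hd.two_dvd
    exact ⟨Int.modEq_iff_dvd.2 ⟨-α * (β + δ + 1), by ring⟩,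
      Int.modEq_iff_dvd.2 ⟨-β * (β + 1 + δ), by ring⟩⟩
  constructor
  · rintro ⟨ha, h₁, h₂⟩
    have hbdb : Odd ((b + d) * b) := by grind [Int.ModEq]
    obtain ⟨hbd, hb⟩ := Int.odd_mul.1 hbdb
    have hd : Even d := by simpa using hbd.sub_odd hb
    obtain ⟨l₁, l₂⟩ := linearize ha hb hd
    have k₁ := l₁.symm.trans h₁
    have k₂ := l₂.symm.trans h₂
    grind [Int.ModEq]
  · rintro ⟨ha, hb, h₁, h₂⟩
    have hd : Even d := by grind [Int.ModEq]
    obtain ⟨l₁, l₂⟩ := linearize (Int.odd_iff.2 ha) (Int.odd_iff.2 hb) hd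
    have k₁ : 1 + b + c + d + e ≡ 2 [ZMOD 4] := by grind [Int.ModEq]
    have k₂ : 1 + d + 2 * c ≡ 1 [ZMOD 4] := by grind [Int.ModEq]
    exact ⟨Int.odd_iff.2 ha, l₁.trans k₁, l₂.trans k₂⟩

theorem transitiveMod_two_pow_iff_two_pow_three {f : ℤ[X]} {n : ℕ} (hn : 3 ≤ n) :
    TransitiveMod f (2 ^ n) ↔ TransitiveMod f (2 ^ 3) := by
  refine ⟨fun h => h.of_dvd (pow_dvd_pow 2 hn), fun h => ?_⟩
  rw [transitiveMod_two_pow_iff] at h ⊢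
  intro m _
  rcases lt_or_ge m 3 with hm | hm
  · exact h m hm
  · exact (h 1 (by norm_num)).of_two_le (h 2 (by norm_num)) (by omega)

theorem larin_transitivity_general (f : ℤ[X]) {n : ℕ} (hn : 3 ≤ n) :
    TransitiveMod f (2 ^ n) ↔
      (f.coeff 0 ≡ 1 [ZMOD 2] ∧
       f.coeff 1 ≡ 1 [ZMOD 2] ∧
       oddCoeffSum f ≡ 2 * f.coeff 2 [ZMOD 4] ∧
       evenCoeffSumFour f ≡ f.coeff 1 + f.coeff 2 - 1 [ZMOD 4]) := by
  rw [transitiveMod_two_pow_iff_two_pow_three hn, transitiveMod_two_pow_iff,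
    (evenQuadraticOddAffine_eval f).dyadicShift_iff, odd_and_modEq_iff_coeff_modEq]

/-- Larin's theorem: `f = a₀ + a₁ X + ⋯ + a_t X^t ∈ ℤ[X]` is transitive mod `2 ^ n` for
every `n ≥ 1` if and only if `a₀ ≡ 1 (mod 2)`, `a₁ ≡ 1 (mod 2)`,
`a₃ + a₅ + a₇ + ⋯ ≡ 2 a₂ (mod 4)`, and `a₄ + a₆ + a₈ + ⋯ ≡ a₁ + a₂ - 1 (mod 4)`. -/
theorem larin_transitivity (f : ℤ[X]) :
    (∀ n : ℕ, 1 ≤ n → TransitiveMod f (2 ^ n)) ↔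
      (f.coeff 0 ≡ 1 [ZMOD 2] ∧
       f.coeff 1 ≡ 1 [ZMOD 2] ∧
       oddCoeffSum f ≡ 2 * f.coeff 2 [ZMOD 4] ∧
       evenCoeffSumFour f ≡ f.coeff 1 + f.coeff 2 - 1 [ZMOD 4]) := by
  refine ⟨fun h => (larin_transitivity_general f le_rfl).1 (h 3 (by norm_num)), fun h n _ => ?_⟩
  exact ((larin_transitivity_general f (le_max_right n 3)).2 h).of_dvd
    (pow_dvd_pow 2 (le_max_left n 3))
end

section
/- Let f(X) = a₀ + a₁X + ⋯ + a_tX^t ∈ ℤ[X] and let F : ℤ₂ → ℤ₂ denote the induced evaluation map on the ring ℤ₂ of 2-adic integers. Then F is ergodic with respect to the normalized Haar measure on the compact additive group ℤ₂ if and only if: (i) a₀ ≡ 1 (mod 2); (ii) a₁ ≡ 1 (mod 2); (iii) a₃ + a₅ + a₇ + ⋯ ≡ 2a₂ (mod 4); (iv) a₄ + a₆ + a₈ + ⋯ ≡ a₁ + a₂ − 1 (mod 4). -/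
open Polynomial MeasureTheory

/-!
The ball of radius `p⁻ⁿ` around a `p`-adic integer is a residue class modulo `pⁿ`, and a finite
measure that weighs all residue classes of each level equally is a multiple of Haar measure.
Applied to the image of Haar measure and to its restriction to an invariant set, this shows that
`F` is ergodic iff it permutes the residues modulo `pⁿ` in one cycle, for every `n`; for a
polynomial this means that `f^[pⁿ] 0` has valuation exactly `n`.

For `p = 2` the cases `n < 3` imply the others. Transitivity modulo `4` makes `f'` odd, so
`g = f^[4]` satisfies `g' ≡ 1` modulo `4`; then
`g (g x) - x = d (1 + g' x + r d)` with `d = g x - x`, and the second factor has valuation `1`.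
Finally, modulo `8` the map `f` is affine on even and on odd integers, which turns the three
remaining valuations into congruences on the coefficients.
-/

open Function (IsPeriodicPt Semiconj minimalPeriod)
open PadicInt (toZModPow)
open Set (univ)

/-- Cyclic dynamics: every point lies on the forward orbit of every other. On a finite type this
says that `f` is a permutation with a single cycle. -/
def IsTransitiveMap {α : Type*} (f : α → α) : Prop :=
  ∀ a b, ∃ k, f^[k] a = b

namespace IsTransitiveMap

variable {α β : Type*} {f : α → α}

lemma surjective (hf : IsTransitiveMap f) : Function.Surjective f := fun b => by
  obtain ⟨k, hk⟩ := hf (f b) b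
  exact ⟨f^[k] b, (Function.iterate_succ_apply' f k b).symm.trans hk⟩

lemma injective [Finite α] (hf : IsTransitiveMap f) : Function.Injective f :=
  Finite.injective_iff_surjective.2 hf.surjective

lemma eq_of_invariant (hf : IsTransitiveMap f) {φ : α → β} (hφ : ∀ a, φ (f a) = φ a) (a b : α) :
    φ a = φ b := by
  obtain ⟨k, rfl⟩ := hf a b
  have h : Semiconj φ f id := hφ
  simpa using (h.iterate_right k a).symm

end IsTransitiveMap

lemma isTransitiveMap_iff_minimalPeriod_eq_card {α : Type*} [Fintype α] {f : α → α} (x : α) :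
    IsTransitiveMap f ↔ minimalPeriod f x = Fintype.card α := by
  constructor
  · intro hf
    obtain ⟨k, hk⟩ := hf (f x) x
    have hx : 0 < minimalPeriod f x := IsPeriodicPt.minimalPeriod_pos k.succ_pos hk
    refine Function.minimalPeriod_le_card.antisymm ?_
    have hsurj : Function.Surjective fun i : Fin (minimalPeriod f x) => f^[i] x := fun b => by
      obtain ⟨k, rfl⟩ := hf x b
      exact ⟨⟨k % minimalPeriod f x, k.mod_lt hx⟩, Function.iterate_mod_minimalPeriod_eq⟩
    simpa using Fintype.card_le_of_surjective _ hsurj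
  · intro hcard
    have hinj : Function.Injective fun i : Fin (minimalPeriod f x) => f^[i] x := fun i j hij =>
      Fin.ext (Function.iterate_injOn_Iio_minimalPeriod i.2 j.2 hij)
    have hsurj := ((Fintype.bijective_iff_injective_and_card _).2 ⟨hinj, by simp [hcard]⟩).2
    intro a b
    obtain ⟨i, rfl⟩ := hsurj a
    obtain ⟨j, rfl⟩ := hsurj b
    refine ⟨j + (minimalPeriod f x - i), ?_⟩
    rw [← Function.iterate_add_apply, add_assoc, Nat.sub_add_cancel i.2.le,
      Function.iterate_add_minimalPeriod_eq]

lemma preimage_preimage_singleton_apply_of_semiconj {α β : Type*} {φ : α → β} {F : α → α}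
    {g : β → β} (h : Semiconj φ F g) (hg : Function.Injective g) (b : β) :
    F ⁻¹' (φ ⁻¹' {g b}) = φ ⁻¹' {b} := by
  ext z
  simp only [Set.mem_preimage, Set.mem_singleton_iff, h z, hg.eq_iff]

section PadicInt

variable {p : ℕ} [Fact p.Prime]

lemma toZModPow_surjective (n : ℕ) : Function.Surjective (toZModPow (p := p) n) :=
  ZMod.ringHom_surjective _

variable (p) in
/-- The cosets `z + pⁿ ℤ_[p]`, encoded as fibres of the reductions `ℤ_[p] → ZMod (p ^ n)`. -/
def residueClasses : Set (Set ℤ_[p]) :=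
  {s | ∃ (n : ℕ) (a : ZMod (p ^ n)), toZModPow n ⁻¹' {a} = s}

lemma toZModPow_preimage_eq_closedBall (n : ℕ) (z : ℤ_[p]) :
    toZModPow n ⁻¹' {toZModPow n z} = Metric.closedBall z ((p : ℝ) ^ (-n : ℤ)) := by
  ext w
  rw [Metric.mem_closedBall, dist_eq_norm, PadicInt.norm_le_pow_iff_mem_span_pow,
    ← PadicInt.ker_toZModPow, RingHom.sub_mem_ker_iff, Set.mem_preimage, Set.mem_singleton_iff]

lemma isOpen_toZModPow_preimage (n : ℕ) (S : Set (ZMod (p ^ n))) :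
    IsOpen (toZModPow n ⁻¹' S : Set ℤ_[p]) := by
  rw [← Set.biUnion_preimage_singleton]
  refine isOpen_biUnion fun a _ => ?_
  obtain ⟨z, rfl⟩ := toZModPow_surjective n a
  rw [toZModPow_preimage_eq_closedBall]
  have hp : (0 : ℝ) < p := mod_cast (Fact.out : p.Prime).pos
  exact IsUltrametricDist.isOpen_closedBall z (by positivity)

lemma toZModPow_eq_of_le {m n : ℕ} (hmn : m ≤ n) {z w : ℤ_[p]}
    (h : toZModPow n z = toZModPow n w) : toZModPow m z = toZModPow m w := by
  rw [← PadicInt.cast_toZModPow m n hmn, ← PadicInt.cast_toZModPow m n hmn, h]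

lemma isPiSystem_residueClasses : IsPiSystem (residueClasses p) := by
  rintro _ ⟨m, a, rfl⟩ _ ⟨n, b, rfl⟩ ⟨w, rfl, rfl⟩
  rcases le_total m n with hmn | hnm
  · exact ⟨n, toZModPow n w, (Set.inter_eq_right.2 fun z hz => toZModPow_eq_of_le hmn hz).symm⟩
  · exact ⟨m, toZModPow m w, (Set.inter_eq_left.2 fun z hz => toZModPow_eq_of_le hnm hz).symm⟩

lemma isTopologicalBasis_residueClasses :
    TopologicalSpace.IsTopologicalBasis (residueClasses p) := by
  refine TopologicalSpace.isTopologicalBasis_of_isOpen_of_nhds ?_ fun z U hz hU => ?_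
  · rintro _ ⟨n, a, rfl⟩
    exact isOpen_toZModPow_preimage n {a}
  · obtain ⟨ε, hε, hball⟩ := Metric.isOpen_iff.1 hU z hz
    obtain ⟨n, hn⟩ := PadicInt.exists_pow_neg_lt p hε
    refine ⟨_, ⟨n, toZModPow n z, rfl⟩, rfl, ?_⟩
    rw [toZModPow_preimage_eq_closedBall]
    exact (Metric.closedBall_subset_ball hn).trans hball

lemma continuous_of_semiconj_toZModPow {F : ℤ_[p] → ℤ_[p]}
    {G : ∀ n, ZMod (p ^ n) → ZMod (p ^ n)} (hG : ∀ n, Semiconj (toZModPow n) F (G n)) :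
    Continuous F := by
  refine isTopologicalBasis_residueClasses.continuous_iff.2 ?_
  rintro _ ⟨n, a, rfl⟩
  rw [← Set.preimage_comp, (hG n).comp_eq, Set.preimage_comp]
  exact isOpen_toZModPow_preimage n _

variable [MeasurableSpace ℤ_[p]]

/-- A measure giving the same mass to all residue classes modulo `pⁿ`, for each `n`. Unlike
translation invariance, this can be checked directly for image measures and restrictions. -/
def IsResidueUniform (ν : Measure ℤ_[p]) : Prop :=
  ∀ (n : ℕ) (a b : ZMod (p ^ n)), ν (toZModPow n ⁻¹' {a}) = ν (toZModPow n ⁻¹' {b})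

variable [BorelSpace ℤ_[p]]

lemma measurableSet_toZModPow_preimage (n : ℕ) (S : Set (ZMod (p ^ n))) :
    MeasurableSet (toZModPow n ⁻¹' S : Set ℤ_[p]) :=
  (isOpen_toZModPow_preimage n S).measurableSet

lemma measurableSpace_eq_generateFrom_residueClasses :
    ‹MeasurableSpace ℤ_[p]› = MeasurableSpace.generateFrom (residueClasses p) :=
  (BorelSpace.measurable_eq).trans isTopologicalBasis_residueClasses.borel_eq_generateFrom

lemma isResidueUniform_of_isAddHaarMeasure (μ : Measure ℤ_[p]) [μ.IsAddHaarMeasure] :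
    IsResidueUniform μ := by
  intro n a b
  obtain ⟨w, hw⟩ := toZModPow_surjective (p := p) n (a - b)
  rw [← measure_preimage_add μ w]
  congr 1
  ext z
  simp only [Set.mem_preimage, Set.mem_singleton_iff, map_add, hw]
  constructor <;> intro h <;> linear_combination h

lemma IsResidueUniform.measure_univ_eq {ν : Measure ℤ_[p]} (hν : IsResidueUniform ν) (n : ℕ)
    (a : ZMod (p ^ n)) : ν univ = p ^ n * ν (toZModPow n ⁻¹' {a}) := by
  have hsum := sum_measure_preimage_singleton (μ := ν) Finset.univ
    fun b _ => measurableSet_toZModPow_preimage (p := p) n {b}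
  rw [Finset.sum_congr rfl fun b _ => hν n b a] at hsum
  simpa [ZMod.card] using hsum.symm

lemma IsResidueUniform.eq_smul {μ ν : Measure ℤ_[p]} [IsProbabilityMeasure μ] [IsFiniteMeasure ν]
    (hμ : IsResidueUniform μ) (hν : IsResidueUniform ν) : ν = ν univ • μ := by
  refine ext_of_generate_finite _ measurableSpace_eq_generateFrom_residueClasses
    isPiSystem_residueClasses ?_ (by simp)
  rintro _ ⟨n, a, rfl⟩
  have hμa : 1 = p ^ n * μ (toZModPow n ⁻¹' {a}) := by rw [← hμ.measure_univ_eq n a, measure_univ]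
  rw [Measure.smul_apply, smul_eq_mul, hν.measure_univ_eq n a, mul_right_comm, ← hμa, one_mul]

section Ergodic

variable {F : ℤ_[p] → ℤ_[p]} {G : ∀ n, ZMod (p ^ n) → ZMod (p ^ n)}
  {μ : Measure ℤ_[p]}

lemma isTransitiveMap_of_ergodic [IsFiniteMeasure μ] [μ.IsOpenPosMeasure] (hF : Ergodic F μ) {n : ℕ}
    {g : ZMod (p ^ n) → ZMod (p ^ n)} (hg : Semiconj (toZModPow n) F g) : IsTransitiveMap g := by
  intro a b
  let orbit : Set (ZMod (p ^ n)) := {c | ∃ k, g^[k] a = c}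
  let A : Set ℤ_[p] := toZModPow n ⁻¹' orbit
  have hA_invariant : A ⊆ F ⁻¹' A := by
    rintro z ⟨k, hk⟩
    exact ⟨k + 1, by rw [Function.iterate_succ_apply', hk, hg z]⟩
  have hA_nonempty : A.Nonempty := by
    obtain ⟨z, hz⟩ := toZModPow_surjective n a
    exact ⟨z, 0, hz.symm⟩
  have hA_compl : μ Aᶜ = 0 := by
    rcases hF.ae_empty_or_univ_of_ae_le_preimage
      (measurableSet_toZModPow_preimage n orbit).nullMeasurableSet hA_invariant.eventuallyLE
      with h | h
    · exact absurd (ae_eq_empty.1 h)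
        ((isOpen_toZModPow_preimage n orbit).measure_ne_zero μ hA_nonempty)
    · exact ae_eq_univ.1 h
  have hA : Aᶜ = ∅ := ((isOpen_toZModPow_preimage n orbitᶜ).measure_eq_zero_iff μ).1 hA_compl
  obtain ⟨z, rfl⟩ := toZModPow_surjective n b
  exact (Set.compl_empty_iff.1 hA).ge (Set.mem_univ z)

variable [IsProbabilityMeasure μ]

lemma measurePreserving_of_bijective_mod (hμ : IsResidueUniform μ)
    (hG : ∀ n, Semiconj (toZModPow n) F (G n)) (hbij : ∀ n, Function.Bijective (G n)) :
    MeasurePreserving F μ μ := by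
  have hF : Measurable F := (continuous_of_semiconj_toZModPow hG).measurable
  have := Measure.isProbabilityMeasure_map (μ := μ) hF.aemeasurable
  have hmap : IsResidueUniform (μ.map F) := fun n b b' => by
    obtain ⟨a, rfl⟩ := (hbij n).surjective b
    obtain ⟨a', rfl⟩ := (hbij n).surjective b'
    simp only [Measure.map_apply hF (measurableSet_toZModPow_preimage n _),
      preimage_preimage_singleton_apply_of_semiconj (hG n) (hbij n).injective]
    exact hμ n a a'
  exact ⟨hF, by simpa using hμ.eq_smul hmap⟩

lemma ergodic_of_isTransitiveMap_mod (hμ : IsResidueUniform μ)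
    (hG : ∀ n, Semiconj (toZModPow n) F (G n)) (htrans : ∀ n, IsTransitiveMap (G n)) :
    Ergodic F μ := by
  have hinj n : Function.Injective (G n) := (htrans n).injective
  have hF : MeasurePreserving F μ μ :=
    measurePreserving_of_bijective_mod hμ hG fun n => ⟨hinj n, (htrans n).surjective⟩
  refine ⟨hF, ⟨fun {A} hA hFA => ?_⟩⟩
  have hrestrict : IsResidueUniform (μ.restrict A) := fun n a b => by
    refine (htrans n).eq_of_invariant (φ := fun c => μ.restrict A (toZModPow n ⁻¹' {c}))
      (fun c => ?_) a b
    have hclass (c : ZMod (p ^ n)) := measurableSet_toZModPow_preimage (p := p) n {c}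
    rw [Measure.restrict_apply (hclass _), Measure.restrict_apply (hclass _),
      ← hF.measure_preimage ((hclass _).inter hA).nullMeasurableSet, Set.preimage_inter, hFA,
      preimage_preimage_singleton_apply_of_semiconj (hG n) (hinj n)]
  have hzero : μ A * μ Aᶜ = 0 := by
    have h := congrArg (· Aᶜ) (hμ.eq_smul hrestrict)
    simpa [Measure.restrict_apply hA.compl] using h.symm
  rw [Filter.eventuallyConst_set', ae_eq_empty, ae_eq_univ]
  exact mul_eq_zero.1 hzero

theorem ergodic_iff_forall_isTransitiveMap_mod [μ.IsAddHaarMeasure]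
    (hG : ∀ n, Semiconj (toZModPow n) F (G n)) :
    Ergodic F μ ↔ ∀ n, IsTransitiveMap (G n) :=
  ⟨fun hF n => isTransitiveMap_of_ergodic hF (hG n),
    ergodic_of_isTransitiveMap_mod (isResidueUniform_of_isAddHaarMeasure μ) hG⟩

end Ergodic

end PadicInt

lemma semiconj_aeval {R S : Type*} [CommRing R] [CommRing S] (φ : R →+* S) (f : ℤ[X]) :
    Semiconj φ (aeval · f) (aeval · f) := fun x =>
  (aeval_algHom_apply φ.toIntAlgHom x f).symm

lemma isPeriodicPt_aeval_zmod_zero_iff (f : ℤ[X]) (m k : ℕ) :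
    IsPeriodicPt (aeval · f : ZMod m → ZMod m) k 0 ↔ (m : ℤ) ∣ (f.eval ·)^[k] 0 := by
  have h := ((semiconj_aeval (Int.castRingHom (ZMod m)) f).iterate_right k) 0
  rw [map_zero] at h
  rw [IsPeriodicPt, Function.IsFixedPt, ← h, ← ZMod.intCast_zmod_eq_zero_iff_dvd]
  simp

lemma isTransitiveMap_aeval_zmod_pow_succ_iff {p : ℕ} [Fact p.Prime] (f : ℤ[X]) (n : ℕ) :
    IsTransitiveMap (aeval · f : ZMod (p ^ (n + 1)) → ZMod (p ^ (n + 1))) ↔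
      (p : ℤ) ^ (n + 1) ∣ (f.eval ·)^[p ^ (n + 1)] 0 ∧
        ¬ (p : ℤ) ^ (n + 1) ∣ (f.eval ·)^[p ^ n] 0 := by
  have hp : p.Prime := Fact.out
  rw [isTransitiveMap_iff_minimalPeriod_eq_card 0, ZMod.card, ← Nat.cast_pow,
    ← isPeriodicPt_aeval_zmod_zero_iff, ← isPeriodicPt_aeval_zmod_zero_iff]
  constructor
  · intro h
    simp only [Function.isPeriodicPt_iff_minimalPeriod_dvd, h, dvd_refl, true_and]
    exact Nat.not_dvd_of_pos_of_lt (pow_pos hp.pos n) (Nat.pow_lt_pow_succ hp.one_lt)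
  · exact fun ⟨hper, hnot⟩ => Function.minimalPeriod_eq_prime_pow hnot hper

lemma forall_isTransitiveMap_aeval_zmod_pow_iff {p : ℕ} [Fact p.Prime] (f : ℤ[X]) :
    (∀ n, IsTransitiveMap (aeval · f : ZMod (p ^ n) → ZMod (p ^ n))) ↔
      ∀ n : ℕ, emultiplicity (p : ℤ) ((f.eval ·)^[p ^ n] 0) = n := by
  simp only [emultiplicity_eq_coe]
  constructor
  · intro h n
    refine ⟨?_, ((isTransitiveMap_aeval_zmod_pow_succ_iff f n).1 (h (n + 1))).2⟩
    cases n with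
    | zero => simp
    | succ n => exact ((isTransitiveMap_aeval_zmod_pow_succ_iff f n).1 (h (n + 1))).1
  · intro h n
    cases n with
    | zero => exact fun a b => ⟨0, Subsingleton.elim (α := ZMod 1) a b⟩
    | succ n => exact (isTransitiveMap_aeval_zmod_pow_succ_iff f n).2 ⟨(h (n + 1)).1, (h n).2⟩

lemma not_dvd_eval_derivative_of_injective {m : ℕ} (hm : 1 < m) {f : ℤ[X]}
    (hf : Function.Injective (aeval · f : ZMod (m ^ 2) → ZMod (m ^ 2))) (x : ℤ) :
    ¬ (m : ℤ) ∣ f.derivative.eval x := by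
  rintro ⟨t, ht⟩
  obtain ⟨k, hk⟩ := binomExpansion f x m
  have hcast (y : ℤ) : ((f.eval y : ℤ) : ZMod (m ^ 2)) = aeval (y : ZMod (m ^ 2)) f :=
    semiconj_aeval (Int.castRingHom (ZMod (m ^ 2))) f y
  have hcollision : ((x + m : ℤ) : ZMod (m ^ 2)) = (x : ZMod (m ^ 2)) := by
    apply hf
    simp only [← hcast]
    rw [eq_comm, ZMod.intCast_eq_intCast_iff_dvd_sub, hk, ht]
    exact ⟨t + k, by push_cast; ring⟩
  rw [eq_comm, ZMod.intCast_eq_intCast_iff_dvd_sub, add_sub_cancel_left, Int.natCast_dvd_natCast]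
    at hcollision
  exact absurd (Nat.le_of_dvd (by lia) hcollision) (by nlinarith)

lemma four_dvd_eval_derivative_sub {R : Type*} [CommRing R] (f : R[X]) {x y : R} (h : 2 ∣ y - x) :
    4 ∣ f.derivative.eval y - f.derivative.eval x := by
  obtain ⟨t, ht⟩ := h
  obtain rfl : y = x + 2 * t := by rw [← ht]; ring
  obtain ⟨k, hk⟩ := binomExpansion f.derivative x (2 * t)
  have hderiv : derivative (derivative f) = 2 * hasseDeriv 2 f := by
    simpa [Nat.factorial, nsmul_eq_mul] using
      (congrFun (factorial_smul_hasseDeriv (R := R) 2) f).symm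
  refine ⟨(hasseDeriv 2 f).eval x * t + k * t ^ 2, ?_⟩
  rw [hk, hderiv, eval_mul, eval_ofNat]
  ring

lemma eval_derivative_comp_self_modEq_one_s17 {g : ℤ[X]} {x : ℤ} (hx : 2 ∣ g.eval x - x)
    (hodd : Odd (g.derivative.eval x)) : (g.comp g).derivative.eval x ≡ 1 [ZMOD 4] := by
  have hmod : g.derivative.eval (g.eval x) ≡ g.derivative.eval x [ZMOD 4] :=
    (Int.modEq_iff_dvd.2 (four_dvd_eval_derivative_sub g hx)).symm
  rw [derivative_comp, eval_mul, eval_comp]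
  calc g.derivative.eval x * g.derivative.eval (g.eval x)
      ≡ g.derivative.eval x * g.derivative.eval x [ZMOD 4] := hmod.mul_left _
    _ ≡ 1 [ZMOD 4] := by rw [← sq]; exact Int.sq_mod_four_eq_one_of_odd hodd

lemma emultiplicity_two_eval_comp_self_sub {g : ℤ[X]} {x : ℤ} (hx : 4 ∣ g.eval x - x)
    (hg : g.derivative.eval x ≡ 1 [ZMOD 4]) :
    emultiplicity 2 ((g.comp g).eval x - x) = emultiplicity 2 (g.eval x - x) + 1 := by
  set d := g.eval x - x
  obtain ⟨r, hr⟩ := binomExpansion g x d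
  have hfactor : (g.comp g).eval x - x = d * (1 + g.derivative.eval x + r * d) := by
    rw [eval_comp, ← add_sub_cancel x (g.eval x), hr]
    ring
  have hone : emultiplicity 2 (1 + g.derivative.eval x + r * d) = 1 := by
    have := hx.mul_left r
    have := hg.dvd
    refine emultiplicity_eq_coe.2 ?_
    omega
  rw [hfactor, emultiplicity_mul Int.prime_two, hone]

lemma emultiplicity_two_iterate_eval_sub {g : ℤ[X]} {x : ℤ} (hx : 4 ∣ g.eval x - x)
    (hg : g.derivative.eval x ≡ 1 [ZMOD 4]) (k : ℕ) :
    emultiplicity 2 ((g.eval ·)^[2 ^ k] x - x) = emultiplicity 2 (g.eval x - x) + k := by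
  induction k generalizing g with
  | zero => simp
  | succ k ih =>
    have hcomp : emultiplicity 2 ((g.comp g).eval x - x) = emultiplicity 2 (g.eval x - x) + 1 :=
      emultiplicity_two_eval_comp_self_sub hx hg
    have hiter : (g.eval ·)^[2 ^ (k + 1)] = ((g.comp g).eval ·)^[2 ^ k] := by
      rw [pow_succ', Function.iterate_mul]
      simp only [Function.iterate_succ, Function.iterate_zero, Function.id_comp, eval_comp]
      rfl
    have hodd : Odd (g.derivative.eval x) := by
      rw [Int.odd_iff]
      exact hg.of_dvd (by norm_num)
    have hcomp_deriv : (g.comp g).derivative.eval x ≡ 1 [ZMOD 4] :=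
      eval_derivative_comp_self_modEq_one_s17 ((by norm_num : (2 : ℤ) ∣ 4).trans hx) hodd
    have hcomp_dvd : 4 ∣ (g.comp g).eval x - x := by
      rw [eval_comp, ← sub_add_sub_cancel _ (g.eval x)]
      exact dvd_add (hx.trans (sub_dvd_eval_sub _ _ g)) hx
    rw [hiter, ih hcomp_dvd hcomp_deriv, hcomp]
    push_cast
    ring

lemma odd_eval_derivative_of_iterate {f : ℤ[X]} (h₂ : ¬ 4 ∣ (f.eval ·)^[2] 0)
    (h₄ : 4 ∣ (f.eval ·)^[4] 0) (x : ℤ) : Odd (f.derivative.eval x) := by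
  have htrans : IsTransitiveMap (aeval · f : ZMod (2 ^ 2) → ZMod (2 ^ 2)) :=
    (isTransitiveMap_aeval_zmod_pow_succ_iff f 1).2 ⟨h₄, h₂⟩
  rw [← Int.not_even_iff_odd, even_iff_two_dvd]
  exact not_dvd_eval_derivative_of_injective one_lt_two htrans.injective x

lemma emultiplicity_two_iterate_two_pow_add_two {f : ℤ[X]}
    (h₂ : emultiplicity (2 : ℤ) ((f.eval ·)^[2] 0) = 1)
    (h₄ : emultiplicity (2 : ℤ) ((f.eval ·)^[4] 0) = 2) (k : ℕ) :
    emultiplicity (2 : ℤ) ((f.eval ·)^[2 ^ (2 + k)] 0) = 2 + k := by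
  obtain ⟨hdvd₂, hndvd₂⟩ := (emultiplicity_eq_coe (n := 1)).1 h₂
  obtain ⟨hdvd₄, -⟩ := (emultiplicity_eq_coe (n := 2)).1 h₄
  have hodd := odd_eval_derivative_of_iterate hndvd₂ hdvd₄
  let g := f.comp f
  have hg_odd : Odd (g.derivative.eval 0) := by
    rw [derivative_comp, eval_mul, eval_comp]
    exact (hodd _).mul (hodd _)
  have hg_eval (x : ℤ) : g.eval x = (f.eval ·)^[2] x := eval_comp
  have hgg_eval (x : ℤ) : (g.comp g).eval x = (f.eval ·)^[4] x := by
    rw [eval_comp, hg_eval, hg_eval, ← Function.iterate_add_apply]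
  have hgg_deriv : (g.comp g).derivative.eval 0 ≡ 1 [ZMOD 4] :=
    eval_derivative_comp_self_modEq_one_s17 (by rwa [sub_zero, hg_eval]) hg_odd
  have hlift := emultiplicity_two_iterate_eval_sub
    (by rwa [sub_zero, hgg_eval]) hgg_deriv k
  simp only [sub_zero, hgg_eval] at hlift
  rw [pow_add, Function.iterate_mul, ← h₄]
  exact hlift

theorem forall_emultiplicity_two_iterate_eval_zero_iff (f : ℤ[X]) :
    (∀ n : ℕ, emultiplicity (2 : ℤ) ((f.eval ·)^[2 ^ n] 0) = n) ↔
      Odd (f.coeff 0) ∧ emultiplicity (2 : ℤ) ((f.eval ·)^[2] 0) = 1 ∧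
        emultiplicity (2 : ℤ) ((f.eval ·)^[4] 0) = 2 := by
  have h₀ : emultiplicity (2 : ℤ) ((f.eval ·)^[1] 0) = 0 ↔ Odd (f.coeff 0) := by
    rw [emultiplicity_eq_zero, Function.iterate_one, ← coeff_zero_eq_eval_zero,
      ← even_iff_two_dvd, Int.not_even_iff_odd]
  rw [← h₀]
  constructor
  · exact fun h => ⟨h 0, h 1, h 2⟩
  · rintro ⟨h₁, h₂, h₄⟩ n
    match n with
    | 0 => exact h₁
    | 1 => exact h₂
    | k + 2 =>
      rw [add_comm k 2, emultiplicity_two_iterate_two_pow_add_two h₂ h₄]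
      push_cast
      rfl

lemma eval_modEq_of_even (f : ℤ[X]) {x : ℤ} (hx : Even x) :
    f.eval x ≡ f.coeff 0 + (f.coeff 1 + 2 * f.coeff 2) * x [ZMOD 8] := by
  obtain ⟨t, rfl⟩ := even_iff_two_dvd.1 hx
  have htaylor : f.eval (2 * t) = f.coeff 0 + f.coeff 1 * (2 * t) + f.coeff 2 * (2 * t) ^ 2 +
      f.divX.divX.divX.eval (2 * t) * (2 * t) ^ 3 := by
    have hdivX (g : ℤ[X]) : g.eval (2 * t) = g.divX.eval (2 * t) * (2 * t) + g.coeff 0 := by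
      simpa using congrArg (eval (2 * t)) g.divX_mul_X_add.symm
    rw [hdivX f, hdivX f.divX, hdivX f.divX.divX]
    simp only [coeff_divX]
    ring
  -- `4 t² ≡ 4 t` modulo `8` turns the quadratic term into a linear one.
  obtain ⟨s, hs⟩ := even_iff_two_dvd.1 (Int.even_mul_pred_self t)
  rw [htaylor]
  refine (Int.modEq_iff_dvd.2 ⟨f.divX.divX.divX.eval (2 * t) * t ^ 3 + f.coeff 2 * s, ?_⟩).symm
  linear_combination 4 * f.coeff 2 * hs

lemma sum_even_coeff (f : ℤ[X]) :
    ∑ i ∈ Finset.range (f.natDegree + 1) with Even i, f.coeff i =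
      f.coeff 0 + f.coeff 2 + evenCoeffSumFour f := by
  rw [← Finset.sum_filter_not_add_sum_filter _ (4 ≤ ·), Finset.filter_filter, Finset.filter_filter,
    evenCoeffSumFour]
  congr 1
  rw [← Finset.sum_pair (f := f.coeff) (show 0 ≠ 2 by decide)]
  refine Finset.sum_subset (fun i => ?_) fun i hi hi' => coeff_eq_zero_of_natDegree_lt ?_
  · simp only [Finset.mem_filter, Finset.mem_insert, Finset.mem_singleton]
    rintro ⟨-, ⟨k, rfl⟩, hk⟩
    lia
  · simp only [Finset.mem_filter, Finset.mem_range, Finset.mem_insert, Finset.mem_singleton]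
      at hi hi'
    rcases hi with rfl | rfl <;> simp_all

lemma sum_odd_coeff (f : ℤ[X]) :
    ∑ i ∈ Finset.range (f.natDegree + 1) with Odd i, f.coeff i =
      f.coeff 1 + oddCoeffSum f := by
  rw [← Finset.sum_filter_not_add_sum_filter _ (3 ≤ ·), Finset.filter_filter, Finset.filter_filter,
    oddCoeffSum]
  congr 1
  rw [← Finset.sum_singleton f.coeff 1]
  refine Finset.sum_subset (fun i => ?_) fun i hi hi' => coeff_eq_zero_of_natDegree_lt ?_
  · simp only [Finset.mem_filter, Finset.mem_singleton]
    rintro ⟨-, ⟨k, rfl⟩, hk⟩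
    lia
  · simp only [Finset.mem_filter, Finset.mem_range, Finset.mem_singleton] at hi hi'
    subst hi
    simp_all

lemma eval_modEq_of_odd (f : ℤ[X]) {x : ℤ} (hx : Odd x) :
    f.eval x ≡ (f.coeff 0 + f.coeff 2 + evenCoeffSumFour f) +
      (f.coeff 1 + oddCoeffSum f) * x [ZMOD 8] := by
  have hsq : x ^ 2 ≡ 1 [ZMOD 8] := (Int.modEq_iff_dvd.2 (Int.eight_dvd_sq_sub_one_of_odd hx)).symm
  have hpow (i : ℕ) : x ^ i ≡ if Even i then 1 else x [ZMOD 8] := by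
    split_ifs with hi
    · obtain ⟨k, rfl⟩ := even_iff_two_dvd.1 hi
      simpa [pow_mul] using hsq.pow k
    · obtain ⟨k, rfl⟩ := Nat.not_even_iff_odd.1 hi
      rw [pow_succ, pow_mul]
      simpa only [one_pow, one_mul] using (hsq.pow k).mul_right x
  calc f.eval x = ∑ i ∈ Finset.range (f.natDegree + 1), f.coeff i * x ^ i := eval_eq_sum_range x
    _ ≡ ∑ i ∈ Finset.range (f.natDegree + 1), f.coeff i * (if Even i then 1 else x) [ZMOD 8] :=
        Int.ModEq.sum fun i _ => (hpow i).mul_left _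
    _ = _ := by
      simp only [mul_ite, mul_one, Finset.sum_ite, Nat.not_even_iff_odd, ← Finset.sum_mul,
        sum_even_coeff, sum_odd_coeff]

lemma eval_eval_modEq_of_even {f : ℤ[X]} (h₀ : Odd (f.coeff 0)) {x : ℤ} (hx : Even x) :
    f.eval (f.eval x) ≡ f.eval (f.coeff 0) +
      (f.coeff 1 + oddCoeffSum f) * (f.coeff 1 + 2 * f.coeff 2) * x [ZMOD 8] := by
  have hfx := eval_modEq_of_even f hx
  have hodd : Odd (f.coeff 0 + (f.coeff 1 + 2 * f.coeff 2) * x) := h₀.add_even (hx.mul_left _)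
  have hshift := (eval_modEq_of_odd f hodd).sub (eval_modEq_of_odd f h₀)
  calc f.eval (f.eval x)
      ≡ f.eval (f.coeff 0 + (f.coeff 1 + 2 * f.coeff 2) * x) [ZMOD 8] :=
        Int.modEq_iff_dvd.2 ((Int.modEq_iff_dvd.1 hfx).trans (sub_dvd_eval_sub _ _ f))
    _ = f.eval (f.coeff 0) +
          (f.eval (f.coeff 0 + (f.coeff 1 + 2 * f.coeff 2) * x) - f.eval (f.coeff 0)) := by ring
    _ ≡ _ [ZMOD 8] := by
      convert hshift.add_left _ using 1
      ring

lemma mul_modEq_one_mod_four_iff {m n : ℤ} :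
    m * n ≡ 1 [ZMOD 4] ↔ Odd m ∧ m ≡ n [ZMOD 4] := by
  have hsq (hm : Odd m) : m * m ≡ 1 [ZMOD 4] := by
    rw [← sq]
    exact Int.sq_mod_four_eq_one_of_odd hm
  constructor
  · intro h
    have hm : Odd m := by
      have hmn : Odd (m * n) := by
        rw [Int.odd_iff]
        exact h.of_dvd (by norm_num)
      exact (Int.odd_mul.1 hmn).1
    refine ⟨hm, ?_⟩
    calc m = m * 1 := (mul_one m).symm
      _ ≡ m * (m * n) [ZMOD 4] := h.symm.mul_left m
      _ = m * m * n := (mul_assoc m m n).symm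
      _ ≡ 1 * n [ZMOD 4] := (hsq hm).mul_right n
      _ = n := one_mul n
  · rintro ⟨hm, h⟩
    exact (h.symm.mul_left m).trans (hsq hm)

lemma emultiplicity_eq_coe_iff_of_modEq {m a b : ℤ} {n : ℕ} (h : a ≡ b [ZMOD m ^ (n + 1)]) :
    emultiplicity m a = n ↔ emultiplicity m b = n := by
  have hdvd := h.dvd
  rw [emultiplicity_eq_coe, emultiplicity_eq_coe, dvd_iff_dvd_of_dvd_sub hdvd,
    dvd_iff_dvd_of_dvd_sub ((pow_dvd_pow m n.le_succ).trans hdvd)]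

lemma emultiplicity_two_iterate_four_eq_two_iff {f : ℤ[X]} (h₀ : Odd (f.coeff 0))
    (h₁ : emultiplicity (2 : ℤ) ((f.eval ·)^[2] 0) = 1) :
    emultiplicity (2 : ℤ) ((f.eval ·)^[4] 0) = 2 ↔
      f.coeff 1 ≡ 1 [ZMOD 2] ∧ oddCoeffSum f ≡ 2 * f.coeff 2 [ZMOD 4] := by
  set u := (f.eval ·)^[2] 0
  set c := (f.coeff 1 + oddCoeffSum f) * (f.coeff 1 + 2 * f.coeff 2) with hc
  have hu_even : Even u := even_iff_two_dvd.2 (dvd_of_emultiplicity_pos (by simp [h₁]))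
  have hu_eval : f.eval (f.coeff 0) = u := by
    rw [coeff_zero_eq_eval_zero]
    rfl
  have hw : (f.eval ·)^[4] 0 ≡ u * (1 + c) [ZMOD 8] := by
    have h := eval_eval_modEq_of_even h₀ hu_even
    rw [hu_eval] at h
    rw [mul_one_add, mul_comm u]
    exact h
  have hc_iff : emultiplicity 2 (1 + c) = 1 ↔ c ≡ 1 [ZMOD 4] := by
    refine emultiplicity_eq_coe.trans ?_
    rw [Int.modEq_iff_dvd]
    omega
  have hcancel : 1 + emultiplicity 2 (1 + c) = 2 ↔ emultiplicity 2 (1 + c) = 1 := by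
    rw [show (2 : ℕ∞) = 1 + 1 from rfl]
    exact (ENat.add_right_injective_of_ne_top ENat.one_ne_top).eq_iff
  refine (emultiplicity_eq_coe_iff_of_modEq (n := 2) (hw.of_dvd (by norm_num))).trans ?_
  rw [Nat.cast_ofNat, emultiplicity_mul Int.prime_two, h₁, hcancel, hc_iff, hc,
    mul_modEq_one_mod_four_iff, Int.odd_iff]
  simp only [Int.modEq_iff_dvd]
  omega

lemma emultiplicity_two_iterate_two_eq_one_iff {f : ℤ[X]} (h₀ : Odd (f.coeff 0))
    (h₁ : f.coeff 1 ≡ 1 [ZMOD 2]) (hsum : oddCoeffSum f ≡ 2 * f.coeff 2 [ZMOD 4]) :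
    emultiplicity (2 : ℤ) ((f.eval ·)^[2] 0) = 1 ↔
      evenCoeffSumFour f ≡ f.coeff 1 + f.coeff 2 - 1 [ZMOD 4] := by
  have hu : (f.eval ·)^[2] 0 ≡ f.coeff 0 + f.coeff 2 + evenCoeffSumFour f +
      (f.coeff 1 + oddCoeffSum f) * f.coeff 0 [ZMOD 8] := by
    simpa [coeff_zero_eq_eval_zero] using eval_modEq_of_odd f h₀
  have hodd : Odd (f.coeff 1 + oddCoeffSum f) := by
    rw [Int.odd_iff]
    have := hsum.dvd
    have := h₁.dvd
    omega
  have hprod : 4 ∣ (f.coeff 1 + oddCoeffSum f - 1) * (f.coeff 0 - 1) :=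
    mul_dvd_mul (a := (2 : ℤ)) (c := 2) (hodd.sub_odd odd_one).two_dvd (h₀.sub_odd odd_one).two_dvd
  have hu4 : (f.eval ·)^[2] 0 ≡ 2 * f.coeff 0 + f.coeff 1 + f.coeff 2 + oddCoeffSum f +
      evenCoeffSumFour f - 1 [ZMOD 4] := by
    refine (hu.of_dvd (by norm_num)).trans (Int.modEq_iff_dvd.2 ?_).symm
    convert hprod using 1
    ring
  refine (emultiplicity_eq_coe_iff_of_modEq (n := 1) (hu4.of_dvd (by norm_num))).trans ?_
  rw [emultiplicity_eq_coe]
  have := hsum.dvd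
  have := h₁.dvd
  rw [Int.odd_iff] at h₀
  rw [Int.modEq_iff_dvd]
  omega

theorem emultiplicity_two_iterate_iff_larin_conditions (f : ℤ[X]) :
    (Odd (f.coeff 0) ∧ emultiplicity (2 : ℤ) ((f.eval ·)^[2] 0) = 1 ∧
        emultiplicity (2 : ℤ) ((f.eval ·)^[4] 0) = 2) ↔
      f.coeff 0 ≡ 1 [ZMOD 2] ∧ f.coeff 1 ≡ 1 [ZMOD 2] ∧
      oddCoeffSum f ≡ 2 * f.coeff 2 [ZMOD 4] ∧
      evenCoeffSumFour f ≡ f.coeff 1 + f.coeff 2 - 1 [ZMOD 4] := by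
  rw [show f.coeff 0 ≡ 1 [ZMOD 2] ↔ Odd (f.coeff 0) from Int.odd_iff.symm]
  refine and_congr_right fun h₀ => ⟨?_, ?_⟩
  · rintro ⟨h₂, h₄⟩
    obtain ⟨h₁, hsum⟩ := (emultiplicity_two_iterate_four_eq_two_iff h₀ h₂).1 h₄
    exact ⟨h₁, hsum, (emultiplicity_two_iterate_two_eq_one_iff h₀ h₁ hsum).1 h₂⟩
  · rintro ⟨h₁, hsum, heven⟩
    have h₂ := (emultiplicity_two_iterate_two_eq_one_iff h₀ h₁ hsum).2 heven
    exact ⟨h₂, (emultiplicity_two_iterate_four_eq_two_iff h₀ h₂).2 ⟨h₁, hsum⟩⟩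

/-- The evaluation map `F : ℤ₂ → ℤ₂` of `f = a₀ + a₁ X + ⋯ + a_t X^t ∈ ℤ[X]` on the
`2`-adic integers is ergodic with respect to the normalized Haar measure `μ` on the compact
additive group `ℤ₂` if and only if `a₀ ≡ 1 (mod 2)`, `a₁ ≡ 1 (mod 2)`,
`a₃ + a₅ + ⋯ ≡ 2 a₂ (mod 4)`, and `a₄ + a₆ + ⋯ ≡ a₁ + a₂ - 1 (mod 4)`. -/
theorem ergodic_iff_larin_conditions (f : ℤ[X])
    [MeasurableSpace ℤ_[2]] [BorelSpace ℤ_[2]]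
    (μ : Measure ℤ_[2]) (hμ : μ.IsAddHaarMeasure) (hprob : IsProbabilityMeasure μ) :
    Ergodic (fun w : ℤ_[2] => aeval w f) μ ↔
      (f.coeff 0 ≡ 1 [ZMOD 2] ∧
       f.coeff 1 ≡ 1 [ZMOD 2] ∧
       oddCoeffSum f ≡ 2 * f.coeff 2 [ZMOD 4] ∧
       evenCoeffSumFour f ≡ f.coeff 1 + f.coeff 2 - 1 [ZMOD 4]) := by
  rw [ergodic_iff_forall_isTransitiveMap_mod fun n => semiconj_aeval (toZModPow n) f,
    forall_isTransitiveMap_aeval_zmod_pow_iff, Nat.cast_ofNat,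
    forall_emultiplicity_two_iterate_eval_zero_iff,
    emultiplicity_two_iterate_iff_larin_conditions]
end
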